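/- The Ramsey number R(K4^+, K3) equals 9; that is, every 2-coloring of the edges of the complete graph on 9 vertices with red and blue contains a red copy of K4^+ or a blue triangle, and there exists a 2-coloring of the edges of the complete graph on 8 vertices with red and blue containing neither a red copy of K4^+ nor a blue triangle. -/

import Mathlib

/-!
Color the edges of a graph red and those of its complement blue, and suppose there is no blue
`K_{t+1}`. If a vertex `x` of a red `K_m` sends no red edge out of this clique, then all vertices
outside are blue neighbors of `x`, so they span no blue `K_t`; once there are at least
`R(K_{m+1}, K_t)` of them, they span a red `K_{m+1}`, and this contains a `K_m` with a pendant edge.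
For `m = 4` and `t = 2`, a red `K_m` exists on `9` vertices since `R(K₄, K₃) ≤ 9`, which is
the Greenwood–Gleason parity refinement of the Erdős–Szekeres recursion, and the `5 = R(K₅, K₂)`
outside vertices suffice. On `8` vertices the Wagner graph serves as the blue graph: it has no
triangle and no independent set of size `4`.
-/

/-- A symmetric edge-coloring function on the complete graph on `Fin n`. -/
def IsSym {n : ℕ} {α : Type*} (c : Fin n → Fin n → α) : Prop :=
  ∀ u v : Fin n, c u v = c v u

/-- A Gallai coloring: no triangle whose three edges get three distinct colors. -/
def NoRainbowTriangle {n : ℕ} {α : Type*} (c : Fin n → Fin n → α) : Prop :=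
  ∀ u v w : Fin n, u ≠ v → u ≠ w → v ≠ w →
    c u v = c u w ∨ c u v = c v w ∨ c u w = c v w

/-- There is a monochromatic triangle in color `i`. -/
def HasMonoK3 {n : ℕ} {α : Type*} (c : Fin n → Fin n → α) (i : α) : Prop :=
  ∃ a b d : Fin n, a ≠ b ∧ a ≠ d ∧ b ≠ d ∧
    c a b = i ∧ c a d = i ∧ c b d = i

/-- There is a monochromatic copy of `K₄⁺ = K₁ ∨ (K₃ + K₁)` in color `i`:
a vertex `x` joined to all of `a, b, d, e`, where `a b d` is a triangle
(equivalently `K₄` on `{x,a,b,d}` together with a pendant edge `x e`). -/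
def HasMonoK4plus {n : ℕ} {α : Type*} (c : Fin n → Fin n → α) (i : α) : Prop :=
  ∃ x a b d e : Fin n,
    x ≠ a ∧ x ≠ b ∧ x ≠ d ∧ x ≠ e ∧ a ≠ b ∧ a ≠ d ∧ a ≠ e ∧ b ≠ d ∧ b ≠ e ∧ d ≠ e ∧
    c x a = i ∧ c x b = i ∧ c x d = i ∧ c x e = i ∧
    c a b = i ∧ c a d = i ∧ c b d = i

open Finset SimpleGraph

/-- The number `n` is an upper bound for the Ramsey number `R(K_s, K_t)`: every graph on `n`
vertices contains an `s`-clique or its complement contains a `t`-clique. -/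
def IsRamseyBound (s t n : ℕ) : Prop :=
  ∀ G : SimpleGraph (Fin n), G.CliqueFree s → ¬ Gᶜ.CliqueFree t

/-- The graph `G` contains a copy of `K_m` with a pendant edge attached; for `m = 4` this is
`K₄⁺`. -/
def HasPendantClique {V : Type*} (G : SimpleGraph V) (m : ℕ) : Prop :=
  ∃ K : Finset V, G.IsNClique m K ∧ ∃ x ∈ K, ∃ y ∉ K, G.Adj x y

/-- The graph formed by the edges of color `i` in the coloring `c`; the values of `c` on the
diagonal are ignored. -/
def colorGraph {n : ℕ} {α : Type*} (c : Fin n → Fin n → α) (hc : IsSym c) (i : α) :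
    SimpleGraph (Fin n) where
  Adj u v := u ≠ v ∧ c u v = i
  symm := ⟨fun u v h => ⟨h.1.symm, hc u v ▸ h.2⟩⟩
  loopless := ⟨fun _ h => h.1 rfl⟩

section Ramsey

variable {V : Type*} {G : SimpleGraph V} {s t n a b : ℕ}

theorem IsRamseyBound.symm (h : IsRamseyBound s t n) : IsRamseyBound t s n :=
  fun G hG hGc => h Gᶜ hGc (by rwa [compl_compl])

theorem isRamseyBound_two_right (s : ℕ) : IsRamseyBound s 2 s := by
  intro G hG hGc
  have hG_top : G = ⊤ := compl_eq_bot.mp (cliqueFree_two.mp hGc)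
  exact IsContained.not_cliqueFree (hG_top ▸ .rfl) hG

theorem IsRamseyBound.card_lt_of_cliqueFreeOn (h : IsRamseyBound s t n) {S : Finset V}
    (hG : G.CliqueFreeOn S s) (hGc : Gᶜ.CliqueFreeOn S t) : #S < n := by
  by_contra! hn
  obtain ⟨f⟩ : Nonempty (Fin n ↪ S) :=
    Function.Embedding.nonempty_of_card_le (by simpa using hn)
  let e : (G.induce (S : Set V)).comap f ↪g G.induce (S : Set V) := Embedding.comap f _
  let ec : ((G.induce (S : Set V)).comap f)ᶜ ↪g Gᶜ.induce (S : Set V) := {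
    toEmbedding := f
    map_rel_iff' := by simp [compl_adj] }
  exact h _ (((cliqueFree_induce_iff _ _ _).mpr hG).comap e.isContained)
    (((cliqueFree_induce_iff _ _ _).mpr hGc).comap ec.isContained)

theorem IsRamseyBound.card_lt [Fintype V] (h : IsRamseyBound s t n) (hG : G.CliqueFree s)
    (hGc : Gᶜ.CliqueFree t) : Fintype.card V < n :=
  h.card_lt_of_cliqueFreeOn (S := univ) hG.cliqueFreeOn hGc.cliqueFreeOn

theorem cliqueFreeOn_neighborSet (hG : G.CliqueFree (s + 1)) (v : V) :
    G.CliqueFreeOn (G.neighborSet v) s := by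
  simpa only [Set.univ_inter] using ((cliqueFreeOn_univ G).mpr hG).of_succ _ (Set.mem_univ v)

theorem IsRamseyBound.degree_lt {v : V} [Fintype (G.neighborSet v)] (h : IsRamseyBound s t n)
    (hG : G.CliqueFree (s + 1)) (hGc : Gᶜ.CliqueFree t) : G.degree v < n :=
  h.card_lt_of_cliqueFreeOn (by simpa only [coe_neighborFinset] using cliqueFreeOn_neighborSet hG v)
    hGc.cliqueFreeOn

theorem degree_add_degree_compl [Fintype V] [DecidableEq V] [DecidableRel G.Adj] (v : V) :
    G.degree v + Gᶜ.degree v + 1 = Fintype.card V := by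
  have hlt := G.degree_lt_card_verts v
  rw [degree_compl]
  omega

theorem IsRamseyBound.succ_succ (ha : IsRamseyBound s (t + 1) (a + 1))
    (hb : IsRamseyBound (s + 1) t (b + 1)) : IsRamseyBound (s + 1) (t + 1) (a + b + 2) := by
  classical
  intro G hG hGc
  have hdeg : G.degree 0 < a + 1 := ha.degree_lt hG hGc
  have hdegc : Gᶜ.degree 0 < b + 1 := hb.symm.degree_lt hGc (by rwa [compl_compl])
  have hsum := degree_add_degree_compl (G := G) 0
  rw [Fintype.card_fin] at hsum
  omega

-- With one vertex fewer every degree would be exactly `a`, and both `a` and the number of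
-- vertices are odd.
theorem IsRamseyBound.succ_succ_of_odd (ha : IsRamseyBound s (t + 1) (a + 1))
    (hb : IsRamseyBound (s + 1) t (b + 1)) (ha_odd : Odd a) (hb_odd : Odd b) :
    IsRamseyBound (s + 1) (t + 1) (a + b + 1) := by
  classical
  intro G hG hGc
  have hreg (v) : G.degree v = a := by
    have hdeg : G.degree v < a + 1 := ha.degree_lt hG hGc
    have hdegc : Gᶜ.degree v < b + 1 := hb.symm.degree_lt hGc (by rwa [compl_compl])
    have hsum := degree_add_degree_compl (G := G) v
    rw [Fintype.card_fin] at hsum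
    omega
  have handshake := G.even_card_odd_degree_vertices
  simp only [hreg, ha_odd, filter_true, card_univ, Fintype.card_fin] at handshake
  exact Nat.not_even_iff_odd.mpr (ha_odd.add_odd hb_odd).add_one handshake

theorem isRamseyBound_three_three : IsRamseyBound 3 3 6 :=
  (isRamseyBound_two_right 3).symm.succ_succ (a := 2) (b := 2) (isRamseyBound_two_right 3)

theorem isRamseyBound_four_three : IsRamseyBound 4 3 9 :=
  isRamseyBound_three_three.succ_succ_of_odd (a := 5) (b := 3) (isRamseyBound_two_right 4)
    (by decide) (by decide)

end Ramsey

section PendantClique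

variable {V : Type*} {G : SimpleGraph V} {m t n k : ℕ}

theorem HasPendantClique.not_cliqueFree (h : HasPendantClique G m) : ¬ G.CliqueFree m :=
  let ⟨_, hK, _⟩ := h
  hK.not_cliqueFree

theorem hasPendantClique_of_not_cliqueFree_succ (hm : 0 < m) (h : ¬ G.CliqueFree (m + 1)) :
    HasPendantClique G m := by
  classical
  simp only [CliqueFree, not_forall, not_not] at h
  obtain ⟨L, hL⟩ := h
  obtain ⟨x, hx, y, hy, hxy⟩ := one_lt_card.mp (by rw [hL.card_eq]; omega)
  exact ⟨L.erase y, hL.erase_of_mem hy, x, mem_erase.mpr ⟨hxy, hx⟩, y, notMem_erase y L,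
    hL.isClique hx hy hxy⟩

theorem hasPendantClique_of_isRamseyBound [Fintype V] (hm : 0 < m)
    (hn : IsRamseyBound m (t + 1) n) (hk : IsRamseyBound (m + 1) t k)
    (hnV : n ≤ Fintype.card V) (hkV : k + m ≤ Fintype.card V) (hGc : Gᶜ.CliqueFree (t + 1)) :
    HasPendantClique G m := by
  classical
  by_contra hpendant
  obtain ⟨K, hK⟩ : ∃ K, G.IsNClique m K := by
    by_contra! hfree
    exact (hn.card_lt hfree hGc).not_ge hnV
  obtain ⟨x, hx⟩ : K.Nonempty := card_pos.mp (hK.card_eq ▸ hm)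
  have houtside : (↑Kᶜ : Set V) ⊆ Gᶜ.neighborSet x := by
    intro y hy
    have hyK : y ∉ K := by simpa using hy
    exact ⟨ne_of_mem_of_not_mem hx hyK, fun hxy => hpendant ⟨K, hK, x, hx, y, hyK, hxy⟩⟩
  have hfree : G.CliqueFree (m + 1) :=
    not_not.mp (mt (hasPendantClique_of_not_cliqueFree_succ hm) hpendant)
  have hlt : #Kᶜ < k := hk.card_lt_of_cliqueFreeOn hfree.cliqueFreeOn
    ((cliqueFreeOn_neighborSet hGc x).subset _ houtside)
  rw [card_compl, hK.card_eq] at hlt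
  omega

end PendantClique

section Coloring

variable {n : ℕ} {α : Type*} {c : Fin n → Fin n → α}

theorem hasMonoK3_iff (hc : IsSym c) (i : α) :
    HasMonoK3 c i ↔ ¬ (colorGraph c hc i).CliqueFree 3 := by
  simp only [CliqueFree, not_forall, not_not, is3Clique_iff]
  constructor
  · rintro ⟨a, b, d, hab, had, hbd, cab, cad, cbd⟩
    exact ⟨{a, b, d}, a, b, d, ⟨hab, cab⟩, ⟨had, cad⟩, ⟨hbd, cbd⟩, rfl⟩
  · rintro ⟨_, a, b, d, ⟨hab, cab⟩, ⟨had, cad⟩, ⟨hbd, cbd⟩, -⟩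
    exact ⟨a, b, d, hab, had, hbd, cab, cad, cbd⟩

theorem hasMonoK4plus_iff (hc : IsSym c) (i : α) :
    HasMonoK4plus c i ↔ HasPendantClique (colorGraph c hc i) 4 := by
  constructor
  · rintro ⟨x, a, b, d, e, hxa, hxb, hxd, hxe, hab, had, hae, hbd, hbe, hde,
      cxa, cxb, cxd, cxe, cab, cad, cbd⟩
    have htriangle : (colorGraph c hc i).IsNClique 3 {a, b, d} :=
      is3Clique_triple_iff.mpr ⟨⟨hab, cab⟩, ⟨had, cad⟩, hbd, cbd⟩
    refine ⟨{x, a, b, d}, htriangle.insert ?_, x, by simp, e, ?_, hxe, cxe⟩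
    · simp only [mem_insert, mem_singleton, forall_eq_or_imp, forall_eq]
      exact ⟨⟨hxa, cxa⟩, ⟨hxb, cxb⟩, hxd, cxd⟩
    · simp only [mem_insert, mem_singleton, not_or]
      exact ⟨hxe.symm, hae.symm, hbe.symm, hde.symm⟩
  · rintro ⟨K, hK, x, hx, e, he, hxe, cxe⟩
    obtain ⟨a, b, d, ⟨hab, cab⟩, ⟨had, cad⟩, ⟨hbd, cbd⟩, htriangle⟩ :=
      is3Clique_iff.mp (hK.erase_of_mem hx)
    have hmem {y} (hy : y ∈ ({a, b, d} : Finset (Fin n))) :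
        (x ≠ y ∧ c x y = i) ∧ y ≠ e := by
      obtain ⟨hyx, hyK⟩ := mem_erase.mp (htriangle ▸ hy)
      exact ⟨hK.isClique hx hyK hyx.symm, ne_of_mem_of_not_mem hyK he⟩
    obtain ⟨⟨hxa, cxa⟩, hae⟩ := hmem (y := a) (by simp)
    obtain ⟨⟨hxb, cxb⟩, hbe⟩ := hmem (y := b) (by simp)
    obtain ⟨⟨hxd, cxd⟩, hde⟩ := hmem (y := d) (by simp)
    exact ⟨x, a, b, d, e, hxa, hxb, hxd, hxe, hab, had, hae, hbd, hbe, hde,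
      cxa, cxb, cxd, cxe, cab, cad, cbd⟩

theorem compl_colorGraph_true {c : Fin n → Fin n → Bool} (hc : IsSym c) :
    (colorGraph c hc true)ᶜ = colorGraph c hc false := by
  ext u v
  simp +contextual [colorGraph, compl_adj]

theorem exists_colorGraph_true_eq (G : SimpleGraph (Fin n)) :
    ∃ (c : Fin n → Fin n → Bool) (hc : IsSym c), colorGraph c hc true = G := by
  classical
  refine ⟨fun u v => decide (G.Adj u v), fun u v => by simp only [G.adj_comm], ?_⟩
  ext u v
  simpa [colorGraph] using G.ne_of_adj

end Coloring

/-- The Wagner graph, encoded as the 8-cycle together with its four long diagonals. -/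
abbrev wagnerGraph : SimpleGraph (Fin 8) :=
  circulantGraph {1, 4}

theorem wagnerGraph_cliqueFree_three : wagnerGraph.CliqueFree 3 := by
  simp only [CliqueFree]
  decide +kernel

theorem compl_wagnerGraph_cliqueFree_four : wagnerGraphᶜ.CliqueFree 4 := by
  simp only [CliqueFree]
  decide +kernel

theorem ramsey_K4plus_K3 :
    (∀ c : Fin 9 → Fin 9 → Bool, IsSym c →
      HasMonoK4plus c true ∨ HasMonoK3 c false) ∧
    (∃ c : Fin 8 → Fin 8 → Bool, IsSym c ∧
      ¬ HasMonoK4plus c true ∧ ¬ HasMonoK3 c false) := by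
  refine ⟨fun c hc => or_iff_not_imp_right.mpr fun hblue => ?_, ?_⟩
  · rw [hasMonoK3_iff hc, not_not, ← compl_colorGraph_true] at hblue
    exact (hasMonoK4plus_iff hc true).mpr <| hasPendantClique_of_isRamseyBound (by decide)
      isRamseyBound_four_three (isRamseyBound_two_right 5) (by simp) (by simp) hblue
  · obtain ⟨c, hc, hred⟩ := exists_colorGraph_true_eq wagnerGraphᶜ
    refine ⟨c, hc, ?_, ?_⟩
    · rw [hasMonoK4plus_iff hc, hred]
      exact fun h => h.not_cliqueFree compl_wagnerGraph_cliqueFree_four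
    · rw [hasMonoK3_iff hc, not_not, ← compl_colorGraph_true, hred, compl_compl]
      exact wagnerGraph_cliqueFree_three
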